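/- Let S ∈ ℝ^{d×d} be symmetric positive definite. Then the function g(Σ) = −log det Σ − trace(Σ⁻¹ S), defined on symmetric positive definite d×d matrices Σ, attains its maximum uniquely at Σ = S. -/

import Mathlib

open Matrix Real

lemma aux_logdet {d : ℕ} (M : Matrix (Fin d) (Fin d) ℝ) (hM : M.PosDef) :
    Real.log M.det ≤ M.trace - d ∧ (Real.log M.det = M.trace - d → M = 1) := by
  have hp := hM.eigenvalues_pos
  have h1 : Real.log M.det = ∑ i, Real.log (hM.1.eigenvalues i) := by
    rw [hM.1.det_eq_prod_eigenvalues]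
    exact Real.log_prod (fun i _ => (hp i).ne')
  have h2 : M.trace - d = ∑ i, (hM.1.eigenvalues i - 1) := by
    rw [hM.1.trace_eq_sum_eigenvalues]
    simp
  have hle : ∀ i ∈ Finset.univ, Real.log (hM.1.eigenvalues i) ≤ hM.1.eigenvalues i - 1 :=
    fun i _ => Real.log_le_sub_one_of_pos (hp i)
  rw [h1, h2]
  refine ⟨Finset.sum_le_sum hle, fun h => ?_⟩
  have h3 := (Finset.sum_eq_sum_iff_of_le hle).1 h
  have h4 : hM.1.eigenvalues = fun _ => 1 := by
    funext i
    by_contra hne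
    exact absurd (h3 i (Finset.mem_univ i)) (Real.log_lt_sub_one_of_pos (hp i) hne).ne
  have h5 := hM.1.spectral_theorem
  rw [h4] at h5
  have h6 : (diagonal (RCLike.ofReal ∘ (fun _ : Fin d => (1:ℝ))) : Matrix (Fin d) (Fin d) ℝ) = 1 := by
    ext i j; simp [diagonal, Matrix.one_apply]
  rw [h6, map_one] at h5
  exact h5

lemma aux_factor {d : ℕ} (S : Matrix (Fin d) (Fin d) ℝ) (hS : S.PosDef) :
    ∃ B : Matrix (Fin d) (Fin d) ℝ, S = Bᴴ * B := by
  open scoped MatrixOrder in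
  exact CStarAlgebra.nonneg_iff_eq_star_mul_self.mp hS.posSemidef.nonneg

lemma aux_main {d : ℕ} (S T : Matrix (Fin d) (Fin d) ℝ) (hS : S.PosDef) (hT : T.PosDef) :
    Real.log S.det - Real.log T.det ≤ (T⁻¹ * S).trace - d ∧
    (Real.log S.det - Real.log T.det = (T⁻¹ * S).trace - d → T = S) := by
  obtain ⟨B, hB⟩ := aux_factor S hS
  have hSd := hS.det_pos
  have hTd := hT.det_pos
  have hBu : IsUnit B.det := by
    rw [isUnit_iff_ne_zero]
    intro h0
    rw [hB, det_mul, h0, mul_zero] at hSd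
    exact lt_irrefl _ hSd
  have hBu' : IsUnit Bᴴ.det := by
    rw [isUnit_iff_ne_zero]
    intro h0
    rw [hB, det_mul, h0, zero_mul] at hSd
    exact lt_irrefl _ hSd
  have hM : (B * T⁻¹ * Bᴴ).PosDef := by
    apply hT.inv.mul_mul_conjTranspose_same
    exact Matrix.vecMul_injective_of_isUnit ((Matrix.isUnit_iff_isUnit_det _).2 hBu)
  have htr : (B * T⁻¹ * Bᴴ).trace = (T⁻¹ * S).trace := by
    rw [hB, Matrix.mul_assoc, Matrix.trace_mul_comm, Matrix.mul_assoc]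
  have hdet : Real.log (B * T⁻¹ * Bᴴ).det = Real.log S.det - Real.log T.det := by
    rw [← Real.log_div hSd.ne' hTd.ne', hB, det_mul, det_mul, det_mul, det_nonsing_inv,
      Ring.inverse_eq_inv']
    congr 1
    ring
  obtain ⟨h1, h2⟩ := aux_logdet _ hM
  rw [htr, hdet] at h1 h2
  refine ⟨h1, fun h => ?_⟩
  have h3 := h2 h
  have hTu : IsUnit T.det := isUnit_iff_ne_zero.2 hTd.ne'
  have h4 : Bᴴ * (B * T⁻¹) = 1 := _root_.mul_eq_one_comm.1 h3
  calc T = (Bᴴ * (B * T⁻¹)) * T := by rw [h4, Matrix.one_mul]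
    _ = Bᴴ * B * (T⁻¹ * T) := by simp only [Matrix.mul_assoc]
    _ = S := by rw [Matrix.nonsing_inv_mul _ hTu, Matrix.mul_one, hB]

/-- For a symmetric positive definite `S`, the function
`g(Σ) = −log det Σ − trace(Σ⁻¹ S)` on symmetric positive definite matrices attains its
maximum uniquely at `Σ = S`. -/
theorem gaussian_mle_covariance (d : ℕ) (S : Matrix (Fin d) (Fin d) ℝ)
    (hSsymm : S.IsSymm) (hSpd : S.PosDef)
    (g : Matrix (Fin d) (Fin d) ℝ → ℝ)
    (hg : ∀ T : Matrix (Fin d) (Fin d) ℝ, g T = -Real.log T.det - (T⁻¹ * S).trace) :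
    (∀ T : Matrix (Fin d) (Fin d) ℝ, T.IsSymm → T.PosDef → g T ≤ g S) ∧
    (∀ T : Matrix (Fin d) (Fin d) ℝ, T.IsSymm → T.PosDef → g T = g S → T = S) := by
  have hSS : (S⁻¹ * S).trace = d := by
    rw [Matrix.nonsing_inv_mul _ (isUnit_iff_ne_zero.2 hSpd.det_pos.ne')]
    simp
  refine ⟨fun T _ hT => ?_, fun T _ hT h => ?_⟩
  · have := (aux_main S T hSpd hT).1
    rw [hg, hg, hSS]
    linarith
  · apply (aux_main S T hSpd hT).2
    rw [hg, hg, hSS] at h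
    linarith
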